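/- Suppose g, h₁, h₂, h₃ ∈ Gal(F/ℚ) satisfy: g(z₁) = z₂, g(z₂) = z₃, g(z₃) = z₁; and for each i, hᵢ(zᵢ) = −zᵢ while hᵢ(z_j) = z_j for j ≠ i; assume every element of Gal(F/ℚ) is written uniquely as g^k h₁^{a₁} h₂^{a₂} h₃^{a₃} with k ∈ {0,1,2} and aᵢ ∈ {0,1}. Set c₁ = −1/(4ρ²), c₂ = −1/(4ρ₂²), c₃ = −1/(4ρ₃²) ∈ F^×, and define λ : Gal(F/ℚ) × Gal(F/ℚ) → F^× by λ(h₁^{a₁}h₂^{a₂}h₃^{a₃}, h₁^{b₁}h₂^{b₂}h₃^{b₃}) = (c₂c₃)^{a₁b₁}(c₁c₃)^{a₂b₂}(c₁c₂)^{a₃b₃} on the subgroup generated by h₁,h₂,h₃, and in general λ(g^k h, g^l h') = g^{k+l}(λ(g^{−l} h g^{l}, h')) for h, h' in that subgroup. Then λ is the coboundary of the 1-cochain c : Gal(F/ℚ) → F^× defined by c(g^k h₁^{a₁} h₂^{a₂} h₃^{a₃}) = g^k( (1/(4ρ₂ρ₃))^{a₁} (1/(4ρρ₃))^{a₂} (1/(4ρρ₂))^{a₃}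 ); in particular λ is a 2-cocycle representing the trivial class in H²(Gal(F/ℚ), F^×) for the natural Galois action of Gal(F/ℚ) on F^×. -/

import Mathlib

theorem stmt18_aux {F : Type*} [Field F] [Algebra ℚ F] (r₁ r₂ r₃ : F)
    (n₁ : r₁ ≠ 0) (n₂ : r₂ ≠ 0) (n₃ : r₃ ≠ 0) (g h₁ h₂ h₃ : F ≃ₐ[ℚ] F)
    (g₁ : g r₁ = r₂) (g₂ : g r₂ = r₃) (g₃ : g r₃ = r₁)
    (f₁₁ : h₁ r₁ = r₁) (f₁₂ : h₁ r₂ = r₂) (f₁₃ : h₁ r₃ = r₃)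
    (f₂₁ : h₂ r₁ = r₁) (f₂₂ : h₂ r₂ = r₂) (f₂₃ : h₂ r₃ = r₃)
    (f₃₁ : h₃ r₁ = r₁) (f₃₂ : h₃ r₂ = r₂) (f₃₃ : h₃ r₃ = r₃)
    (s₁ : h₁ * h₁ = 1) (s₂ : h₂ * h₂ = 1) (s₃ : h₃ * h₃ = 1)
    (k₁₂ : h₁ * h₂ = h₂ * h₁) (k₁₃ : h₁ * h₃ = h₃ * h₁) (k₂₃ : h₂ * h₃ = h₃ * h₂)
    (j₁ : g * h₁ = h₂ * g) (j₂ : g * h₂ = h₃ * g) (j₃ : g * h₃ = h₁ * g)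
    (hnf : ∀ σ : F ≃ₐ[ℚ] F, ∃ x : Fin 3 × Fin 2 × Fin 2 × Fin 2,
      σ = g ^ (x.1 : ℕ) * h₁ ^ (x.2.1 : ℕ) * h₂ ^ (x.2.2.1 : ℕ) * h₃ ^ (x.2.2.2 : ℕ))
    (c₁ c₂ c₃ : F) (hc₁ : c₁ = -1 / (4 * r₁ ^ 2)) (hc₂ : c₂ = -1 / (4 * r₂ ^ 2))
    (hc₃ : c₃ = -1 / (4 * r₃ ^ 2))
    (lam : (F ≃ₐ[ℚ] F) → (F ≃ₐ[ℚ] F) → F)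
    (hlam₁ : ∀ a₁ a₂ a₃ b₁ b₂ b₃ : Fin 2,
      lam (h₁ ^ (a₁ : ℕ) * h₂ ^ (a₂ : ℕ) * h₃ ^ (a₃ : ℕ))
          (h₁ ^ (b₁ : ℕ) * h₂ ^ (b₂ : ℕ) * h₃ ^ (b₃ : ℕ))
        = (c₂ * c₃) ^ ((a₁ : ℕ) * (b₁ : ℕ)) * (c₁ * c₃) ^ ((a₂ : ℕ) * (b₂ : ℕ))
            * (c₁ * c₂) ^ ((a₃ : ℕ) * (b₃ : ℕ)))
    (hlam₂ : ∀ (k l : ℕ) (h h' : F ≃ₐ[ℚ] F),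
      h ∈ Subgroup.closure {h₁, h₂, h₃} → h' ∈ Subgroup.closure {h₁, h₂, h₃} →
      lam (g ^ k * h) (g ^ l * h')
        = (g ^ (k + l)) (lam ((g ^ l)⁻¹ * h * g ^ l) h'))
    (c : (F ≃ₐ[ℚ] F) → F)
    (hc : ∀ (k : ℕ) (a₁ a₂ a₃ : Fin 2),
      c (g ^ k * h₁ ^ (a₁ : ℕ) * h₂ ^ (a₂ : ℕ) * h₃ ^ (a₃ : ℕ))
        = (g ^ k) ((1 / (4 * r₂ * r₃)) ^ (a₁ : ℕ) * (1 / (4 * r₁ * r₃)) ^ (a₂ : ℕ)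
            * (1 / (4 * r₁ * r₂)) ^ (a₃ : ℕ))) :
    (∀ σ τ : F ≃ₐ[ℚ] F, lam σ τ = σ (c τ) * (c (σ * τ))⁻¹ * c σ) ∧
    (∀ σ τ υ : F ≃ₐ[ℚ] F, σ (lam τ υ) * lam σ (τ * υ) = lam (σ * τ) υ * lam σ τ) ∧
    (∀ σ τ : F ≃ₐ[ℚ] F, lam σ τ ≠ 0) ∧ (∀ σ : F ≃ₐ[ℚ] F, c σ ≠ 0) := by
  have h4 : (4 : F) ≠ 0 := by
    have : CharZero F := algebraRat.charZero F
    norm_num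
  obtain ⟨H, hH⟩ : ∃ H : Fin 2 → Fin 2 → Fin 2 → (F ≃ₐ[ℚ] F), ∀ a b d,
      H a b d = h₁ ^ (a : ℕ) * h₂ ^ (b : ℕ) * h₃ ^ (d : ℕ) := ⟨_, fun _ _ _ => rfl⟩
  obtain ⟨C, hC⟩ : ∃ C : Fin 2 → Fin 2 → Fin 2 → F, ∀ a b d,
      C a b d = (1 / (4 * r₂ * r₃)) ^ (a : ℕ) * (1 / (4 * r₁ * r₃)) ^ (b : ℕ)
            * (1 / (4 * r₁ * r₂)) ^ (d : ℕ) := ⟨_, fun _ _ _ => rfl⟩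
  have hC0 : ∀ a b d, C a b d ≠ 0 := by
    intro a b d
    rw [hC]
    simp [n₁, n₂, n₃, h4]
  have hcH : ∀ k a b d, c (g ^ k * H a b d) = (g ^ k) (C a b d) := by
    intro k a b d
    rw [hH, hC, ← hc]
    simp only [mul_assoc]
  have hnf' : ∀ σ, ∃ (k : ℕ) (a b d : Fin 2), σ = g ^ k * H a b d := by
    intro σ
    obtain ⟨x, hx⟩ := hnf σ
    refine ⟨x.1, x.2.1, x.2.2.1, x.2.2.2, ?_⟩
    rw [hH]
    simpa only [mul_assoc] using hx
  have hfix : ∀ a b d a' b' d', (H a b d) (C a' b' d') = C a' b' d' := by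
    intro a b d a' b' d'
    have e : ∀ (h : F ≃ₐ[ℚ] F), h r₁ = r₁ → h r₂ = r₂ → h r₃ = r₃ → ∀ n : ℕ,
        (h ^ n) (C a' b' d') = C a' b' d' := by
      intro h e1 e2 e3 n
      have e0 : h (C a' b' d') = C a' b' d' := by
        rw [hC]; simp only [map_mul, map_pow, map_div₀, map_one, e1, e2, e3, map_ofNat]
      induction n with
      | zero => simp
      | succ n ih => rw [pow_succ, AlgEquiv.mul_apply, e0, ih]
    rw [hH, AlgEquiv.mul_apply, AlgEquiv.mul_apply, e h₃ f₃₁ f₃₂ f₃₃, e h₂ f₂₁ f₂₂ f₂₃,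
      e h₁ f₁₁ f₁₂ f₁₃]
  have hgC : ∀ a b d, g (C b d a) = C a b d := by
    intro a b d
    rw [hC, hC]
    simp only [map_mul, map_pow, map_div₀, map_one, g₁, g₂, g₃, map_ofNat]
    ring
  have hjp : ∀ x y : F ≃ₐ[ℚ] F, g * x = y * g → ∀ n : ℕ, g * x ^ n = y ^ n * g := by
    intro x y hxy n
    exact (SemiconjBy.pow_right (show SemiconjBy g x y from hxy) n)
  have hkp : ∀ x y : F ≃ₐ[ℚ] F, x * y = y * x → ∀ m n : ℕ, x ^ m * y ^ n = y ^ n * x ^ m := by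
    intro x y hxy m n
    exact (Commute.pow_pow (show Commute x y from hxy) m n)
  have hgH : ∀ a b d, H a b d * g = g * H b d a := by
    intro a b d
    rw [hH, hH, ← mul_assoc, ← mul_assoc, hjp _ _ j₁, mul_assoc _ g, hjp _ _ j₂,
      mul_assoc _ _ (h₃ ^ (a : ℕ)), mul_assoc _ g, hjp _ _ j₃, ← mul_assoc, ← mul_assoc]
    congr 1
    rw [mul_assoc (h₂ ^ (b : ℕ)), ← hkp _ _ k₁₃, ← mul_assoc (h₂ ^ (b : ℕ)), ← hkp _ _ k₁₂]
  have hconj : ∀ (l : ℕ) a b d, ∃ a' b' d', H a b d * g ^ l = g ^ l * H a' b' d' ∧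
      (g ^ l) (C a' b' d') = C a b d := by
    intro l
    induction l with
    | zero => intro a b d; exact ⟨a, b, d, by simp, by simp⟩
    | succ l ih =>
      intro a b d
      obtain ⟨a', b', d', e1, e2⟩ := ih a b d
      refine ⟨b', d', a', ?_, ?_⟩
      · rw [pow_succ, ← mul_assoc, e1, mul_assoc, hgH, mul_assoc]
      · rw [pow_succ, AlgEquiv.mul_apply, hgC, e2]
  have hsq : ∀ x : F ≃ₐ[ℚ] F, x * x = 1 → ∀ a b : Fin 2,
      x ^ (a : ℕ) * x ^ (b : ℕ) = x ^ ((a + b : Fin 2) : ℕ) := by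
    intro x hx a b
    fin_cases a <;> fin_cases b <;> simp [hx]
  have hHH : ∀ a b d a' b' d', H a b d * H a' b' d' = H (a + a') (b + b') (d + d') := by
    intro a b d a' b' d'
    rw [hH, hH, hH, ← hsq _ s₁, ← hsq _ s₂, ← hsq _ s₃]
    have e1 := hkp _ _ k₁₂ a' b
    have e2 := hkp _ _ k₁₃ a' d
    have e3 := hkp _ _ k₂₃ b' d
    simp only [mul_assoc]
    congr 1
    rw [← mul_assoc (h₃ ^ (d : ℕ)), ← e2, ← mul_assoc (h₁ ^ (a' : ℕ)) (h₂ ^ (b : ℕ)), e1]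
    simp only [mul_assoc]
    congr 2
    rw [← mul_assoc (h₃ ^ (d : ℕ)), ← e3, mul_assoc]
  have hone : ∀ x y : F, x ≠ 0 → x * x = y → ∀ a b : Fin 2,
      y ^ ((a : ℕ) * (b : ℕ)) * x ^ ((a + b : Fin 2) : ℕ) = x ^ (a : ℕ) * x ^ (b : ℕ) := by
    intro x y hx hxy a b
    fin_cases a <;> fin_cases b <;> simp [hxy]
  have hlamH : ∀ a b d a' b' d', lam (H a b d) (H a' b' d') * C (a + a') (b + b') (d + d')
      = C a' b' d' * C a b d := by
    intro a b d a' b' d'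
    rw [hH, hH, hlam₁, hC, hC, hC]
    have e1 := hone (1 / (4 * r₂ * r₃)) (c₂ * c₃) (by simp [*])
      (by rw [hc₂, hc₃]; field_simp; try norm_num) a a'
    have e2 := hone (1 / (4 * r₁ * r₃)) (c₁ * c₃) (by simp [*])
      (by rw [hc₁, hc₃]; field_simp; try norm_num) b b'
    have e3 := hone (1 / (4 * r₁ * r₂)) (c₁ * c₂) (by simp [*])
      (by rw [hc₁, hc₂]; field_simp; try norm_num) d d'
    rw [mul_mul_mul_comm, mul_mul_mul_comm (_ ^ _) (_ ^ _) (_ ^ _), e1, e2, e3]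
    ring
  have hmem : ∀ a b d, H a b d ∈ Subgroup.closure {h₁, h₂, h₃} := by
    intro a b d
    rw [hH]
    refine mul_mem (mul_mem (pow_mem ?_ _) (pow_mem ?_ _)) (pow_mem ?_ _) <;>
      exact Subgroup.subset_closure (by simp)
  have hc0 : ∀ σ : F ≃ₐ[ℚ] F, c σ ≠ 0 := by
    intro σ
    obtain ⟨k, a, b, d, rfl⟩ := hnf' σ
    rw [hcH]
    exact (map_ne_zero (g ^ k)).mpr (hC0 a b d)
  have main : ∀ σ τ : F ≃ₐ[ℚ] F, lam σ τ = σ (c τ) * (c (σ * τ))⁻¹ * c σ := by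
    intro σ τ
    have key : lam σ τ * c (σ * τ) = σ (c τ) * c σ := by
      obtain ⟨k, a, b, d, rfl⟩ := hnf' σ
      obtain ⟨l, a', b', d', rfl⟩ := hnf' τ
      obtain ⟨p, q, r, e1, e2⟩ := hconj l a b d
      have e3 : (g ^ l)⁻¹ * H a b d * g ^ l = H p q r := by
        rw [mul_assoc, e1, inv_mul_cancel_left]
      have e4 : g ^ k * H a b d * (g ^ l * H a' b' d')
          = g ^ (k + l) * H (p + a') (q + b') (r + d') := by
        rw [← hHH, pow_add, mul_assoc, ← mul_assoc (H a b d), e1]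
        simp only [mul_assoc]
      have e5 : (g ^ k * H a b d) ((g ^ l) (C a' b' d')) = (g ^ (k + l)) (C a' b' d') := by
        rw [← AlgEquiv.mul_apply, mul_assoc, e1, ← mul_assoc, AlgEquiv.mul_apply, hfix, pow_add]
      have e6 : (g ^ k) (C a b d) = (g ^ (k + l)) (C p q r) := by
        rw [← e2, pow_add, AlgEquiv.mul_apply]
      rw [hlam₂ k l _ _ (hmem _ _ _) (hmem _ _ _), e3, e4, hcH, hcH, hcH, e5, e6, ← map_mul,
        ← map_mul, hlamH]
    have := hc0 (σ * τ)
    field_simp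
    exact key
  refine ⟨main, ?_, ?_, hc0⟩
  · intro σ τ υ
    rw [main τ υ, main σ (τ * υ), main (σ * τ) υ, main σ τ]
    simp only [map_mul, map_inv₀, AlgEquiv.mul_apply, mul_assoc σ τ υ]
    have e1 := hc0 (σ * τ)
    have e2 : σ (c (τ * υ)) ≠ 0 := by simpa using hc0 (τ * υ)
    have e3 := hc0 (σ * (τ * υ))
    field_simp
  · intro σ τ
    rw [main]
    have e2 : σ (c τ) ≠ 0 := by simpa using hc0 τ
    exact mul_ne_zero (mul_ne_zero e2 (inv_ne_zero (hc0 _))) (hc0 _)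

/-- The explicit `2`-cochain `λ` on `Gal(F/ℚ)` with values in `F^×`
(built from `c₁ = −1/(4ρ²)`, `c₂ = −1/(4ρ₂²)`, `c₃ = −1/(4ρ₃²)`) is the coboundary of the
`1`-cochain `c` given by `c(g^k h₁^{a₁} h₂^{a₂} h₃^{a₃}) =
g^k((1/(4ρ₂ρ₃))^{a₁}(1/(4ρρ₃))^{a₂}(1/(4ρρ₂))^{a₃})`; in particular `λ` is a `2`-cocycle
representing the trivial class in `H²(Gal(F/ℚ), F^×)`. -/
theorem stmt18 (ρ ρ₂ ρ₃ : ℝ) (hρroot : ρ ^ 3 - 3 * ρ + 1 = 0) (hρneg : ρ < 0)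
    (hρ₂ : ρ₂ = 1 / (1 - ρ)) (hρ₃ : ρ₃ = 1 - 1 / ρ)
    (z₁ z₂ z₃ : ℂ) (hz₁ : z₁ ^ 2 = (ρ : ℂ)) (hz₂ : z₂ ^ 2 = (ρ₂ : ℂ)) (hz₃ : z₃ ^ 2 = (ρ₃ : ℂ))
    (F : IntermediateField ℚ ℂ) (hF : F = IntermediateField.adjoin ℚ {z₁, z₂, z₃})
    (hm₁ : z₁ ∈ F) (hm₂ : z₂ ∈ F) (hm₃ : z₃ ∈ F)
    -- `ρ, ρ₂, ρ₃` as elements of `F`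
    (ρF ρ₂F ρ₃F : F) (hρF : (ρF : ℂ) = (ρ : ℂ)) (hρ₂F : (ρ₂F : ℂ) = (ρ₂ : ℂ))
    (hρ₃F : (ρ₃F : ℂ) = (ρ₃ : ℂ))
    -- the Galois automorphisms `g, h₁, h₂, h₃`
    (g h₁ h₂ h₃ : F ≃ₐ[ℚ] F)
    (hg₁ : (g ⟨z₁, hm₁⟩ : ℂ) = z₂) (hg₂ : (g ⟨z₂, hm₂⟩ : ℂ) = z₃)
    (hg₃ : (g ⟨z₃, hm₃⟩ : ℂ) = z₁)
    (hh₁₁ : (h₁ ⟨z₁, hm₁⟩ : ℂ) = -z₁) (hh₁₂ : (h₁ ⟨z₂, hm₂⟩ : ℂ) = z₂)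
    (hh₁₃ : (h₁ ⟨z₃, hm₃⟩ : ℂ) = z₃)
    (hh₂₁ : (h₂ ⟨z₁, hm₁⟩ : ℂ) = z₁) (hh₂₂ : (h₂ ⟨z₂, hm₂⟩ : ℂ) = -z₂)
    (hh₂₃ : (h₂ ⟨z₃, hm₃⟩ : ℂ) = z₃)
    (hh₃₁ : (h₃ ⟨z₁, hm₁⟩ : ℂ) = z₁) (hh₃₂ : (h₃ ⟨z₂, hm₂⟩ : ℂ) = z₂)
    (hh₃₃ : (h₃ ⟨z₃, hm₃⟩ : ℂ) = -z₃)
    -- unique normal form `g^k h₁^{a₁} h₂^{a₂} h₃^{a₃}` with `k ∈ {0,1,2}`, `aᵢ ∈ {0,1}`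
    (hnf : ∀ σ : F ≃ₐ[ℚ] F, ∃! x : Fin 3 × Fin 2 × Fin 2 × Fin 2,
      σ = g ^ (x.1 : ℕ) * h₁ ^ (x.2.1 : ℕ) * h₂ ^ (x.2.2.1 : ℕ) * h₃ ^ (x.2.2.2 : ℕ))
    -- the constants `c₁, c₂, c₃`
    (c₁ c₂ c₃ : F) (hc₁ : c₁ = -1 / (4 * ρF ^ 2)) (hc₂ : c₂ = -1 / (4 * ρ₂F ^ 2))
    (hc₃ : c₃ = -1 / (4 * ρ₃F ^ 2))
    -- the `2`-cochain `λ`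
    (lam : (F ≃ₐ[ℚ] F) → (F ≃ₐ[ℚ] F) → F)
    (hlam₁ : ∀ a₁ a₂ a₃ b₁ b₂ b₃ : Fin 2,
      lam (h₁ ^ (a₁ : ℕ) * h₂ ^ (a₂ : ℕ) * h₃ ^ (a₃ : ℕ))
          (h₁ ^ (b₁ : ℕ) * h₂ ^ (b₂ : ℕ) * h₃ ^ (b₃ : ℕ))
        = (c₂ * c₃) ^ ((a₁ : ℕ) * (b₁ : ℕ)) * (c₁ * c₃) ^ ((a₂ : ℕ) * (b₂ : ℕ))
            * (c₁ * c₂) ^ ((a₃ : ℕ) * (b₃ : ℕ)))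
    (hlam₂ : ∀ (k l : ℕ) (h h' : F ≃ₐ[ℚ] F),
      h ∈ Subgroup.closure {h₁, h₂, h₃} → h' ∈ Subgroup.closure {h₁, h₂, h₃} →
      lam (g ^ k * h) (g ^ l * h')
        = (g ^ (k + l)) (lam ((g ^ l)⁻¹ * h * g ^ l) h'))
    -- the `1`-cochain `c`
    (c : (F ≃ₐ[ℚ] F) → F)
    (hc : ∀ (k : ℕ) (a₁ a₂ a₃ : Fin 2),
      c (g ^ k * h₁ ^ (a₁ : ℕ) * h₂ ^ (a₂ : ℕ) * h₃ ^ (a₃ : ℕ))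
        = (g ^ k) ((1 / (4 * ρ₂F * ρ₃F)) ^ (a₁ : ℕ) * (1 / (4 * ρF * ρ₃F)) ^ (a₂ : ℕ)
            * (1 / (4 * ρF * ρ₂F)) ^ (a₃ : ℕ))) :
    -- `λ` is the coboundary of `c` …
    (∀ σ τ : F ≃ₐ[ℚ] F, lam σ τ = σ (c τ) * (c (σ * τ))⁻¹ * c σ) ∧
    -- … and in particular a `2`-cocycle (trivial in `H²(Gal(F/ℚ), F^×)`)
    (∀ σ τ υ : F ≃ₐ[ℚ] F, σ (lam τ υ) * lam σ (τ * υ) = lam (σ * τ) υ * lam σ τ) ∧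
    (∀ σ τ : F ≃ₐ[ℚ] F, lam σ τ ≠ 0) ∧ (∀ σ : F ≃ₐ[ℚ] F, c σ ≠ 0) := by
  have hρ0 : ρ ≠ 0 := hρneg.ne
  have h20 : ρ₂ ≠ 0 := by
    rw [hρ₂]; exact one_div_ne_zero (by linarith)
  have h30 : ρ₃ ≠ 0 := by
    rw [hρ₃]
    have : 1 / ρ < 0 := one_div_neg.mpr hρneg
    linarith
  have q₁ : ρF = (⟨z₁, hm₁⟩ : F) ^ 2 := Subtype.ext (by rw [hρF, ← hz₁]; rfl)
  have q₂ : ρ₂F = (⟨z₂, hm₂⟩ : F) ^ 2 := Subtype.ext (by rw [hρ₂F, ← hz₂]; rfl)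
  have q₃ : ρ₃F = (⟨z₃, hm₃⟩ : F) ^ 2 := Subtype.ext (by rw [hρ₃F, ← hz₃]; rfl)
  have n₁ : ρF ≠ 0 := by
    intro h; rw [h] at hρF; exact hρ0 (Complex.ofReal_eq_zero.mp hρF.symm)
  have n₂ : ρ₂F ≠ 0 := by
    intro h; rw [h] at hρ₂F; exact h20 (Complex.ofReal_eq_zero.mp hρ₂F.symm)
  have n₃ : ρ₃F ≠ 0 := by
    intro h; rw [h] at hρ₃F; exact h30 (Complex.ofReal_eq_zero.mp hρ₃F.symm)
  obtain ⟨y₁, hy₁⟩ : ∃ y : F, y = ⟨z₁, hm₁⟩ := ⟨_, rfl⟩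
  obtain ⟨y₂, hy₂⟩ : ∃ y : F, y = ⟨z₂, hm₂⟩ := ⟨_, rfl⟩
  obtain ⟨y₃, hy₃⟩ : ∃ y : F, y = ⟨z₃, hm₃⟩ := ⟨_, rfl⟩
  have ext3 : ∀ σ τ : F ≃ₐ[ℚ] F, σ y₁ = τ y₁ → σ y₂ = τ y₂ → σ y₃ = τ y₃ → σ = τ := by
    intro σ τ e1 e2 e3
    have : (σ : F →ₐ[ℚ] F) = (τ : F →ₐ[ℚ] F) := by
      apply IntermediateField.algHom_ext_of_eq_adjoin ℚ hF
      rintro x (rfl | rfl | rfl)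
      · rw [hy₁] at e1; exact e1
      · rw [hy₂] at e2; exact e2
      · rw [hy₃] at e3; exact e3
    exact AlgEquiv.ext fun x => DFunLike.congr_fun this x
  replace hg₁ : g y₁ = y₂ := by rw [hy₁, hy₂]; exact Subtype.ext hg₁
  replace hg₂ : g y₂ = y₃ := by rw [hy₂, hy₃]; exact Subtype.ext hg₂
  replace hg₃ : g y₃ = y₁ := by rw [hy₃, hy₁]; exact Subtype.ext hg₃
  replace hh₁₁ : h₁ y₁ = -y₁ := by rw [hy₁]; exact Subtype.ext hh₁₁
  replace hh₁₂ : h₁ y₂ = y₂ := by rw [hy₂]; exact Subtype.ext hh₁₂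
  replace hh₁₃ : h₁ y₃ = y₃ := by rw [hy₃]; exact Subtype.ext hh₁₃
  replace hh₂₁ : h₂ y₁ = y₁ := by rw [hy₁]; exact Subtype.ext hh₂₁
  replace hh₂₂ : h₂ y₂ = -y₂ := by rw [hy₂]; exact Subtype.ext hh₂₂
  replace hh₂₃ : h₂ y₃ = y₃ := by rw [hy₃]; exact Subtype.ext hh₂₃
  replace hh₃₁ : h₃ y₁ = y₁ := by rw [hy₁]; exact Subtype.ext hh₃₁
  replace hh₃₂ : h₃ y₂ = y₂ := by rw [hy₂]; exact Subtype.ext hh₃₂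
  replace hh₃₃ : h₃ y₃ = -y₃ := by rw [hy₃]; exact Subtype.ext hh₃₃
  rw [← hy₁] at q₁
  rw [← hy₂] at q₂
  rw [← hy₃] at q₃
  refine stmt18_aux ρF ρ₂F ρ₃F n₁ n₂ n₃ g h₁ h₂ h₃ ?_ ?_ ?_ ?_ ?_ ?_ ?_ ?_ ?_ ?_ ?_ ?_
    ?_ ?_ ?_ ?_ ?_ ?_ ?_ ?_ ?_ (fun σ => (hnf σ).exists) c₁ c₂ c₃ hc₁ hc₂ hc₃ lam hlam₁ hlam₂ c hc
  iterate 12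
    simp only [q₁, q₂, q₃, map_pow, hg₁, hg₂, hg₃, hh₁₁, hh₁₂, hh₁₃, hh₂₁, hh₂₂, hh₂₃, hh₃₁, hh₃₂,
      hh₃₃, neg_sq]
  all_goals
    apply ext3 <;> simp only [AlgEquiv.mul_apply, AlgEquiv.one_apply, map_neg, neg_neg, hg₁, hg₂,
      hg₃, hh₁₁, hh₁₂, hh₁₃, hh₂₁, hh₂₂, hh₂₃, hh₃₁, hh₃₂, hh₃₃]
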